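/- For every deletion probability p ∈ [0,1) there exists a constant C > 0 (depending only on p) such that for every integer n ≥ 2, setting k := ⌈2·n^{1/5}⌉, for all distinct strings x, y ∈ {0,1}^n the k-mer density maps satisfy ‖K_x − K_y‖₁ ≥ exp(−C·n^{1/5}·(log n)^5). -/

import Mathlib

open Finset

/-- Indicator (as a Prop) that the `k`-mer `w` occurs in `x` starting at position `j`,
i.e. `x_{j+t} = w_t` for all in-range `t`. -/
def occAt {n k : ℕ} (x : Fin n → Bool) (w : Fin k → Bool) (j : ℕ) : Prop :=
  ∀ t : Fin k, ∀ h : j + t.1 < n, x ⟨j + t.1, h⟩ = w t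

open Classical in
/-- The real-valued indicator `1[x[j : j+k-1] = w]`. -/
noncomputable def indAt {n k : ℕ} (x : Fin n → Bool) (w : Fin k → Bool) (j : ℕ) : ℝ :=
  if occAt x w j then 1 else 0

/-- The `k`-mer density map entry
`K_{w,x}[i] = ∑_{j=0}^{n-k} C(j,i) p^{j-i} (1-p)^i 1[x[j:j+k-1]=w]`. -/
noncomputable def Kmap (p : ℝ) {n k : ℕ} (x : Fin n → Bool) (w : Fin k → Bool) (i : ℕ) : ℝ :=
  ∑ j ∈ Finset.range (n - k + 1),
    (j.choose i : ℝ) * p ^ (j - i) * (1 - p) ^ i * indAt x w j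

/-- The ℓ₁ distance between the `k`-mer density maps of `x` and `y`. -/
noncomputable def kmerL1 (p : ℝ) {n : ℕ} (k : ℕ) (x y : Fin n → Bool) : ℝ :=
  ∑ w : Fin k → Bool, ∑ i ∈ Finset.range n, |Kmap p x w i - Kmap p y w i|

theorem exists_rot (M : ℕ) (hM : 0 < M) (w : ℂ) (hw : ‖w‖ = 1) :
    ∃ m ∈ range M, ‖w * Complex.exp (2 * Real.pi * Complex.I / M) ^ m - 1‖ ≤ 2 * Real.pi / M := by
  have hMR : (0:ℝ) < M := by exact_mod_cast hM
  set t := w.arg with ht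
  have hwt : w = Complex.exp (t * Complex.I) := by
    have := Complex.norm_mul_exp_arg_mul_I w
    rw [hw] at this
    simpa using this.symm
  set f : ℤ := -⌊t * M / (2 * Real.pi)⌋ with hf
  have hMz : (0:ℤ) < M := by exact_mod_cast hM
  refine ⟨(f % (M:ℤ)).toNat, ?_, ?_⟩
  · rw [mem_range]
    have h1 := Int.emod_lt_of_pos f hMz
    have h2 := Int.emod_nonneg f hMz.ne'
    omega
  · set ζ := Complex.exp (2 * Real.pi * Complex.I / M) with hζ
    have hMc : (M:ℂ) ≠ 0 := by exact_mod_cast hM.ne'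
    have hζM : ζ ^ (M:ℤ) = 1 := by
      rw [zpow_natCast, hζ, ← Complex.exp_nat_mul, mul_div_cancel₀ _ hMc, Complex.exp_two_pi_mul_I]
    have h2 := Int.emod_nonneg f hMz.ne'
    have hpow : ζ ^ (f % (M:ℤ)).toNat = ζ ^ f := by
      rw [← zpow_natCast, Int.toNat_of_nonneg h2]
      conv_rhs => rw [← Int.emod_add_mul_ediv f M, zpow_add₀ (Complex.exp_ne_zero _), zpow_mul, hζM,
        one_zpow, mul_one]
    rw [hpow, hζ, ← Complex.exp_int_mul, hwt, ← Complex.exp_add]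
    set s : ℝ := t + f * (2 * Real.pi / M) with hs
    have : (t:ℂ) * Complex.I + (f:ℂ) * (2 * Real.pi * Complex.I / M) = Complex.I * (s:ℂ) := by
      rw [hs]; push_cast; ring
    rw [this]
    refine (Real.norm_exp_I_mul_ofReal_sub_one_le).trans ?_
    have hpi := Real.pi_pos
    have hfl1 := Int.floor_le (t * M / (2 * Real.pi))
    have hfl2 := Int.lt_floor_add_one (t * M / (2 * Real.pi))
    have hs' : s = (t * M / (2 * Real.pi) - ⌊t * M / (2 * Real.pi)⌋) * (2 * Real.pi / M) := by
      rw [hs, hf]; push_cast; field_simp; ring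
    have hq : 0 < 2 * Real.pi / M := by positivity
    rw [Real.norm_eq_abs, hs', abs_of_nonneg (by apply mul_nonneg <;> linarith)]
    nlinarith

theorem rot_bound (G : ℂ → ℂ) (hG : ∀ w, ‖w‖ ≤ 1 → DifferentiableAt ℂ G w) (B ε τ : ℝ)
    (hB : ∀ w, ‖w‖ = 1 → ‖G w‖ ≤ B) (hε : ∀ w, ‖w‖ = 1 → ‖w - 1‖ ≤ τ → ‖G w‖ ≤ ε)
    (M : ℕ) (hM : 0 < M) (hMτ : 2 * Real.pi / M ≤ τ) :
    ‖G 0‖ ^ M ≤ ε * B ^ (M - 1) := by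
  set ζ := Complex.exp (2 * Real.pi * Complex.I / M) with hζ
  have hζ1 : ‖ζ‖ = 1 := by
    have : (2 * Real.pi * Complex.I / M : ℂ) = ((2 * Real.pi / M : ℝ) : ℂ) * Complex.I := by
      push_cast; ring
    rw [hζ, this, Complex.norm_exp_ofReal_mul_I]
  have hn : ∀ w : ℂ, ∀ m : ℕ, ‖w * ζ ^ m‖ = ‖w‖ := by intro w m; simp [hζ1]
  have key := Complex.norm_le_of_forall_mem_frontier_norm_le (U := Metric.ball (0:ℂ) 1)
    (f := fun w => ∏ m ∈ range M, G (w * ζ ^ m)) (C := ε * B ^ (M - 1)) (z := 0)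
    Metric.isBounded_ball ?_ ?_ ?_
  · simpa using key
  · apply DifferentiableOn.diffContOnCl
    rw [closure_ball _ one_ne_zero]
    intro w hw
    apply DifferentiableAt.differentiableWithinAt
    apply DifferentiableAt.fun_finsetProd
    intro m _
    have := hG (w * ζ ^ m) (by rw [hn]; simpa using hw)
    exact DifferentiableAt.comp (f := fun w => w * ζ ^ m) w this (by fun_prop)
  · intro w hw
    rw [frontier_ball _ one_ne_zero] at hw
    have hw : ‖w‖ = 1 := by simpa using hw
    obtain ⟨m, hm, hmw⟩ := exists_rot M hM w hw
    have h0 : ‖G (w * ζ ^ m)‖ ≤ ε := hε _ (by rw [hn, hw]) (hmw.trans hMτ)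
    rw [← mul_prod_erase _ _ hm, norm_mul]
    refine mul_le_mul h0 ?_ (norm_nonneg _) ((norm_nonneg _).trans h0)
    rw [norm_prod]
    refine (prod_le_prod (fun _ _ => norm_nonneg _)
      (fun i _ => hB _ (by rw [hn, hw]))).trans ?_
    rw [prod_const, card_erase_of_mem hm, card_range]
  · exact subset_closure (by simp)

/-- unit-circle version around `z0 = 1 - δ` -/
theorem arc_bound (R : ℂ → ℂ) (hR : Differentiable ℂ R) (B ε δ a : ℝ)
    (hδ0 : 0 < δ) (hδ1 : δ < 1) (ha : a ≤ δ)
    (hB : ∀ w, ‖w‖ = 1 → ‖R w‖ ≤ B) (hε : ∀ w, ‖w‖ = 1 → ‖w - 1‖ ≤ a → ‖R w‖ ≤ ε)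
    (M : ℕ) (hM : 0 < M) (hMτ : 2 * Real.pi / M ≤ a / δ) :
    ‖R ((1 - δ : ℝ) : ℂ)‖ ^ M ≤ ε * B ^ (M - 1) := by
  set r : ℝ := 1 - δ with hr
  have hr0 : 0 < r := by linarith
  have hr1 : r < 1 := by linarith
  have hne : ∀ w : ℂ, ‖w‖ ≤ 1 → 1 + (r:ℂ) * w ≠ 0 := by
    intro w hw h
    have h1 : ‖(r:ℂ) * w‖ = 1 := by
      rw [show (r:ℂ) * w = -1 by linear_combination h]; simp
    rw [norm_mul, Complex.norm_real, Real.norm_of_nonneg hr0.le] at h1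
    nlinarith
  have hunit : ∀ w : ℂ, ‖w‖ = 1 → ‖(w + r) / (1 + r * w)‖ = 1 := by
    intro w hw
    rw [norm_div, div_eq_one_iff_eq (norm_ne_zero_iff.2 (hne w hw.le))]
    rw [← sq_eq_sq₀ (norm_nonneg _) (norm_nonneg _), Complex.sq_norm, Complex.sq_norm]
    have : w.re * w.re + w.im * w.im = 1 := by
      have := Complex.sq_norm w
      rw [hw, Complex.normSq_apply] at this; linarith
    simp [Complex.normSq_apply]
    linear_combination (1 - r ^ 2) * this
  have := rot_bound (fun w => R ((w + r) / (1 + r * w))) ?_ B ε (a / δ) ?_ ?_ M hM hMτ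
  · simpa using this
  · intro w hw
    refine DifferentiableAt.comp (f := fun w : ℂ => (w + r) / (1 + r * w)) w (hR _) ?_
    exact DifferentiableAt.div (by fun_prop) (by fun_prop) (hne w hw)
  · intro w hw
    exact hB _ (hunit w hw)
  · intro w hw hw1
    refine hε _ (hunit w hw) ?_
    have e : (w + r) / (1 + r * w) - 1 = (w - 1) * ((δ:ℝ):ℂ) / (1 + r * w) := by
      have := hne w hw.le
      rw [div_sub_one this]
      congr 1
      rw [hr]; push_cast; ring
    have hw2 : ‖w - 1‖ ≤ 1 := hw1.trans ((div_le_one hδ0).2 ha)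
    have hre : 0 ≤ w.re := by
      have := (Complex.abs_re_le_norm (w - 1)).trans hw2
      rw [abs_le] at this
      have := this.1
      simp at this; linarith
    have hge : 1 ≤ ‖1 + r * w‖ := by
      refine le_trans ?_ (Complex.re_le_norm _)
      simp
      positivity
    rw [e, norm_div, norm_mul, Complex.norm_real, Real.norm_of_nonneg hδ0.le]
    rw [div_le_iff₀ (by linarith)]
    have h3 : ‖w - 1‖ * δ ≤ a := by rwa [le_div_iff₀ hδ0] at hw1
    have : 0 ≤ ‖w - 1‖ * δ := by positivity
    nlinarith

/-! ### Combinatorics -/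

/-- total extension of a string -/
def extS {n : ℕ} (x : Fin n → Bool) (i : ℕ) : Bool := if h : i < n then x ⟨i, h⟩ else false

theorem extS_of_lt {n : ℕ} (x : Fin n → Bool) (i : ℕ) (h : i < n) : extS x i = x ⟨i, h⟩ := by
  simp [extS, h]

theorem occ_iff {n : ℕ} (k : ℕ) (x : Fin n → Bool) (W : ℕ → Bool) (j : ℕ) :
    occAt x (fun t : Fin k => W t.1) j ↔ ∀ t < k, j + t < n → extS x (j + t) = W t := by
  constructor
  · intro h t ht hj
    rw [extS_of_lt x _ hj]
    exact h ⟨t, ht⟩ hj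
  · intro h t hj
    rw [← extS_of_lt x _ hj]
    exact h t.1 t.2 hj

theorem indAt_cases {n k : ℕ} (x : Fin n → Bool) (w : Fin k → Bool) (j : ℕ) :
    indAt x w j = 0 ∨ indAt x w j = 1 := by
  unfold indAt; split_ifs <;> simp

theorem kmerL1_symm (p : ℝ) {n : ℕ} (k : ℕ) (x y : Fin n → Bool) :
    kmerL1 p k x y = kmerL1 p k y x := by
  unfold kmerL1; simp_rw [abs_sub_comm]

theorem basic_facts {n : ℕ} (k : ℕ) (hk : 1 ≤ k) (x y : Fin n → Bool) (d : ℕ) (hd : d < n)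
    (hag : ∀ i < d, extS x i = extS y i) (hne : extS x d ≠ extS y d) :
    (∀ j < d + 1 - k, indAt x (fun t : Fin k => extS x (d + 1 - k + t.1)) j
        = indAt y (fun t : Fin k => extS x (d + 1 - k + t.1)) j) ∧
    indAt x (fun t : Fin k => extS x (d + 1 - k + t.1)) (d + 1 - k) = 1 ∧
    indAt y (fun t : Fin k => extS x (d + 1 - k + t.1)) (d + 1 - k) = 0 := by
  refine ⟨?_, ?_, ?_⟩
  · intro j hj
    unfold indAt
    congr 1
    rw [eq_iff_iff, occ_iff k x (fun t => extS x (d + 1 - k + t)),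
      occ_iff k y (fun t => extS x (d + 1 - k + t))]
    refine forall_congr' fun t => forall_congr' fun ht => forall_congr' fun hj => ?_
    rw [hag (j + t) (by omega)]
  · unfold indAt
    rw [if_pos]
    rw [occ_iff k x (fun t => extS x (d + 1 - k + t))]
    intros; rfl
  · unfold indAt
    rw [if_neg]
    rw [occ_iff k y (fun t => extS x (d + 1 - k + t))]
    intro h
    have := h (d - (d + 1 - k)) (by omega) (by omega)
    rw [show d + 1 - k + (d - (d + 1 - k)) = d by omega] at this
    exact hne this.symm

/-- no period of length in `[1, l]` for the word `W 0 … W (k-1)` -/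
def NoPer (W : ℕ → Bool) (k l : ℕ) : Prop :=
  ∀ a, 1 ≤ a → a ≤ l → ¬ ∀ t, t + a < k → W t = W (t + a)

theorem noPer_or (U V : ℕ → Bool) (k l : ℕ) (hk : 2 * l ≤ k)
    (hag : ∀ t, t + 1 < k → U t = V t) (hne : U (k - 1) ≠ V (k - 1)) :
    NoPer U k l ∨ NoPer V k l := by
  by_contra hcon
  unfold NoPer at hcon
  push Not at hcon
  obtain ⟨⟨a, ha1, hal, ha⟩, ⟨b, hb1, hbl, hb⟩⟩ := hcon
  have h1 := ha (k - 1 - a) (by omega)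
  have h2 := hb (k - 1 - b) (by omega)
  rw [show k - 1 - a + a = k - 1 by omega] at h1
  rw [show k - 1 - b + b = k - 1 by omega] at h2
  apply hne
  rw [← h1, ← h2]
  by_cases hab : a = b
  · subst hab
    exact hag _ (by omega)
  · have h3 := hb (k - 1 - a - b) (by omega)
    have h4 := ha (k - 1 - a - b) (by omega)
    rw [show k - 1 - a - b + b = k - 1 - a by omega] at h3
    rw [show k - 1 - a - b + a = k - 1 - b by omega] at h4
    rw [hag (k - 1 - a) (by omega), ← h3, ← hag (k - 1 - b) (by omega), ← h4]
    exact (hag _ (by omega)).symm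

theorem occ_sep {n : ℕ} (k l : ℕ) (y : Fin n → Bool) (W : ℕ → Bool) (hW : NoPer W k l)
    (i j : ℕ) (hij : i < j) (hjl : j ≤ i + l) (hj : j + k ≤ n)
    (hi : indAt y (fun t : Fin k => W t.1) i = 1) :
    indAt y (fun t : Fin k => W t.1) j = 0 := by
  unfold indAt at hi ⊢
  rw [if_neg]
  have hi : occAt y (fun t : Fin k => W t.1) i := by
    by_contra h
    rw [if_neg h] at hi; norm_num at hi
  rw [occ_iff] at hi ⊢
  intro hj'
  apply hW (j - i) (by omega) (by omega)
  intro t ht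
  rw [← hj' t (by omega) (by omega), ← hi (t + (j - i)) (by omega) (by omega)]
  congr 1; omega

theorem sparse_lower (b Y : ℕ → ℝ) (N l : ℕ) (r : ℝ) (hr0 : 0 ≤ r) (hr1 : r ≤ 1) (hN : 0 < N)
    (hb0 : b 0 = 1) (hbY : ∀ i, - Y i ≤ b i) (hY : ∀ i, Y i = 0 ∨ Y i = 1)
    (hsep : ∀ i j, 1 ≤ i → i < j → j ≤ l → j < N → Y i = 1 → Y j = 0) :
    1 - r - N * r ^ l ≤ ∑ i ∈ range N, b i * r ^ i := by
  have hS : ∑ i ∈ range N, (if 1 ≤ i ∧ i ≤ l then Y i else 0) ≤ 1 := by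
    by_cases h : ∃ i, i ∈ range N ∧ 1 ≤ i ∧ i ≤ l ∧ Y i = 1
    · obtain ⟨i, hiN, hi1, hil, hiY⟩ := h
      rw [mem_range] at hiN
      rw [sum_eq_single i]
      · rw [if_pos ⟨hi1, hil⟩, hiY]
      · intro j hj hji
        rw [mem_range] at hj
        split_ifs with hc
        · rcases lt_or_gt_of_ne hji with h | h
          · rcases hY j with h0 | h1
            · exact h0
            · have := hsep j i hc.1 h hil hiN h1
              linarith
          · exact hsep i j hi1 h hc.2 hj hiY
        · rfl
      · intro h; exact absurd (mem_range.2 hiN) h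
    · push Not at h
      rw [sum_eq_zero]
      · norm_num
      · intro i hi
        split_ifs with hc
        · exact (hY i).resolve_right (h i hi hc.1 hc.2)
        · rfl
  have hterm : ∀ i ∈ range N, (if i = 0 then (1:ℝ) else 0)
      - r * (if 1 ≤ i ∧ i ≤ l then Y i else 0) - r ^ l ≤ b i * r ^ i := by
    intro i _
    have hrl : 0 ≤ r ^ l := pow_nonneg hr0 l
    have hri : 0 ≤ r ^ i := pow_nonneg hr0 i
    by_cases h0 : i = 0
    · subst h0; simp [hb0, hrl]
    · rw [if_neg h0]
      have hb := mul_le_mul_of_nonneg_right (hbY i) hri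
      by_cases hc : i ≤ l
      · rw [if_pos ⟨by omega, hc⟩]
        have h1 : r ^ i ≤ r := pow_le_of_le_one hr0 hr1 h0
        have hY0 : 0 ≤ Y i := by rcases hY i with h | h <;> rw [h] <;> norm_num
        nlinarith
      · rw [if_neg (fun h => hc h.2)]
        have h1 : r ^ i ≤ r ^ l := pow_le_pow_of_le_one hr0 hr1 (by omega)
        rcases hY i with h | h <;> rw [h] at hb <;> linarith
  have := sum_le_sum hterm
  rw [sum_sub_distrib, sum_sub_distrib, ← mul_sum, sum_const, card_range, nsmul_eq_mul,
    sum_ite_eq' (range N) 0 (fun _ => (1:ℝ)), if_pos (mem_range.2 hN)] at this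
  nlinarith

/-! ### Generating function -/

theorem gen_bound (p : ℝ) {n : ℕ} (k : ℕ) (hk : 1 ≤ k) (hn : 1 ≤ n) (x y : Fin n → Bool)
    (w : Fin k → Bool) (u : ℂ) (U : ℝ) (hU : 1 ≤ U) (hu : ‖u‖ ≤ U) :
    ‖∑ j ∈ range (n - k + 1), ((indAt x w j - indAt y w j : ℝ) : ℂ) * (p + (1 - p) * u) ^ j‖
      ≤ kmerL1 p k x y * U ^ n := by
  have e : ∑ j ∈ range (n - k + 1), ((indAt x w j - indAt y w j : ℝ) : ℂ) * (p + (1 - p) * u) ^ j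
      = ∑ i ∈ range n, ((Kmap p x w i - Kmap p y w i : ℝ) : ℂ) * u ^ i := by
    have h1 : ∀ i, ((Kmap p x w i - Kmap p y w i : ℝ) : ℂ) * u ^ i
        = ∑ j ∈ range (n - k + 1), ((indAt x w j - indAt y w j : ℝ) : ℂ) *
          ((j.choose i : ℂ) * (p:ℂ) ^ (j - i) * (1 - p) ^ i * u ^ i) := by
      intro i
      unfold Kmap
      rw [← sum_sub_distrib]
      push_cast
      rw [sum_mul]
      refine sum_congr rfl fun j _ => ?_
      ring
    simp_rw [h1]
    rw [sum_comm]
    refine sum_congr rfl fun j hj => ?_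
    rw [mem_range] at hj
    rw [← mul_sum]
    congr 1
    rw [add_comm (p:ℂ), add_pow]
    refine (sum_subset_zero_on_sdiff (range_subset_range.2 (by omega : j + 1 ≤ n)) ?_ ?_)
    · intro i hi
      simp only [mem_sdiff, mem_range] at hi
      rw [Nat.choose_eq_zero_of_lt (by omega)]
      simp
    · intro i _
      rw [mul_pow]; ring
  rw [e]
  refine (norm_sum_le _ _).trans ?_
  have hU0 : (0:ℝ) ≤ U := by linarith
  have h2 : ∑ i ∈ range n, ‖((Kmap p x w i - Kmap p y w i : ℝ) : ℂ) * u ^ i‖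
      ≤ ∑ i ∈ range n, |Kmap p x w i - Kmap p y w i| * U ^ n := by
    refine sum_le_sum fun i hi => ?_
    rw [mem_range] at hi
    rw [norm_mul, Complex.norm_real, Real.norm_eq_abs, norm_pow]
    refine mul_le_mul_of_nonneg_left ?_ (abs_nonneg _)
    exact (pow_le_pow_left₀ (norm_nonneg _) hu i).trans (pow_le_pow_right₀ hU hi.le)
  refine h2.trans ?_
  rw [← sum_mul]
  refine mul_le_mul_of_nonneg_right ?_ (by positivity)
  unfold kmerL1
  exact single_le_sum (f := fun w : Fin k → Bool =>
    ∑ i ∈ range n, |Kmap p x w i - Kmap p y w i|)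
    (fun w _ => sum_nonneg fun i _ => abs_nonneg _) (mem_univ w)

/-- shifted polynomial -/
theorem shift_poly (c : ℕ → ℝ) (m N : ℕ) (hc : ∀ j < m, c j = 0) (z : ℂ) :
    ∑ j ∈ range (m + N), (c j : ℂ) * z ^ j
      = z ^ m * ∑ i ∈ range N, (c (m + i) : ℂ) * z ^ i := by
  rw [sum_range_add, sum_eq_zero, zero_add, mul_sum]
  · refine sum_congr rfl fun i _ => ?_
    rw [pow_add]; ring
  · intro j hj
    rw [hc j (mem_range.1 hj)]; simp

theorem case_one (p : ℝ) (hp0 : 0 ≤ p) (hp1 : p < 1) :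
    ∃ c : ℝ, 0 < c ∧ ∀ (n k : ℕ), 1 ≤ k → 1 ≤ n → ∀ (x y : Fin n → Bool) (w : Fin k → Bool)
      (m : ℕ), m < n - k + 1 → (∀ j < m, indAt x w j = indAt y w j) →
      indAt x w m = 1 → indAt y w m = 0 →
      c * ((1 + p) / 2) ^ m ≤ kmerL1 p k x y := by
  set ρ : ℝ := (1 + p) / 2 with hρ
  have hρ0 : 0 < ρ := by positivity
  have hρ1 : ρ < 1 := by rw [hρ]; linarith
  set B : ℝ := (1 - ρ)⁻¹ with hB
  have hB0 : 0 < B := inv_pos.2 (by linarith)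
  set M : ℕ := ⌈2 * Real.pi / ((1 - p) / 2)⌉₊ with hM
  have hpi := Real.pi_pos
  have hq : 0 < (1 - p) / 2 := by linarith
  have hM0 : 0 < M := Nat.ceil_pos.2 (by positivity)
  have hMR : (0:ℝ) < M := by exact_mod_cast hM0
  have hMτ : 2 * Real.pi / M ≤ (1 - p) / 2 := by
    rw [div_le_comm₀ hMR hq]
    exact Nat.le_ceil _
  refine ⟨(B ^ (M - 1))⁻¹, by positivity, ?_⟩
  intro n k hk hn x y w m hm hlow hx hy
  obtain ⟨N, hN⟩ : ∃ N, n - k + 1 = m + N := ⟨n - k + 1 - m, by omega⟩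
  have hN0 : 0 < N := by omega
  set c : ℕ → ℝ := fun j => indAt x w j - indAt y w j with hc
  have hc1 : ∀ j, |c j| ≤ 1 := by
    intro j
    rcases indAt_cases x w j with h | h <;> rcases indAt_cases y w j with h' | h' <;>
      simp [hc, h, h']
  set R : ℂ → ℂ := fun z => ∑ i ∈ range N, (c (m + i) : ℂ) * z ^ i with hR
  have hRd : Differentiable ℂ R := by
    intro z; simp only [hR]; fun_prop
  have key := rot_bound (fun v => R (ρ * v)) ?_ B (kmerL1 p k x y / ρ ^ m) ((1 - p) / 2)
    ?_ ?_ M hM0 hMτ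
  · have hR0 : ‖R 0‖ = 1 := by
      have : R 0 = 1 := by
        simp only [hR]
        rw [sum_eq_single 0]
        · simp [hc, hx, hy]
        · intro i _ hi; simp [hi]
        · intro h; exact absurd (mem_range.2 hN0) h
      rw [this]; simp
    rw [mul_zero, hR0, one_pow] at key
    rw [inv_mul_le_iff₀ (by positivity)]
    have h2 : 0 < ρ ^ m := by positivity
    rw [div_mul_eq_mul_div, le_div_iff₀ h2] at key
    linarith
  · intro v _
    exact DifferentiableAt.comp (f := fun v : ℂ => (ρ:ℂ) * v) v (hRd _) (by fun_prop)
  · intro v hv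
    simp only [hR]
    refine (norm_sum_le _ _).trans ?_
    have : ∀ i ∈ range N, ‖(c (m + i) : ℂ) * (ρ * v) ^ i‖ ≤ ρ ^ i := by
      intro i _
      rw [norm_mul, norm_pow, norm_mul, hv, Complex.norm_real, Complex.norm_real,
        Real.norm_of_nonneg hρ0.le, mul_one, Real.norm_eq_abs]
      exact mul_le_of_le_one_left (by positivity) (hc1 _)
    refine (sum_le_sum this).trans ?_
    rw [hB, ← tsum_geometric_of_lt_one hρ0.le hρ1]
    exact (summable_geometric_of_lt_one hρ0.le hρ1).sum_le_tsum _ (fun i _ => by positivity)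
  · intro v hv hv1
    have hpc : (1 - (p:ℂ)) ≠ 0 := by
      have : ((1 - p : ℝ) : ℂ) ≠ 0 := by
        rw [Complex.ofReal_ne_zero]; linarith
      simpa using this
    have hu : ‖((ρ:ℂ) * v - p) / (1 - p)‖ ≤ 1 := by
      rw [norm_div, show (1 - (p:ℂ)) = ((1 - p : ℝ) : ℂ) by push_cast; ring, Complex.norm_real,
        Real.norm_of_nonneg (by linarith), div_le_one (by linarith)]
      have e : (ρ:ℂ) * v - p = ((ρ:ℝ):ℂ) * (v - 1) + ((ρ - p : ℝ) : ℂ) := by push_cast; ring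
      rw [e]
      refine (norm_add_le _ _).trans ?_
      rw [norm_mul, Complex.norm_real, Complex.norm_real, Real.norm_of_nonneg hρ0.le,
        Real.norm_of_nonneg (by rw [hρ]; linarith)]
      have : ρ * ‖v - 1‖ ≤ (1 - p) / 2 :=
        (mul_le_of_le_one_left (norm_nonneg _) hρ1.le).trans hv1
      rw [hρ] at this ⊢; linarith
    have h := gen_bound p k hk hn x y w _ 1 le_rfl hu
    rw [mul_div_cancel₀ _ hpc, add_sub_cancel, one_pow, mul_one, hN] at h
    rw [shift_poly c m N (fun j hj => by simp [hc, hlow j hj]) (ρ * v)] at h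
    rw [norm_mul, norm_pow, norm_mul, hv, Complex.norm_real, Real.norm_of_nonneg hρ0.le,
      mul_one] at h
    rw [le_div_iff₀ (by positivity), mul_comm]
    exact h

theorem case_two (p : ℝ) (hp0 : 0 ≤ p) (hp1 : p < 1) (n k : ℕ) (hk : 1 ≤ k) (hn : 1 ≤ n)
    (x y : Fin n → Bool) (w : Fin k → Bool) (m N : ℕ) (hN : n - k + 1 = m + N)
    (hlow : ∀ j < m, indAt x w j = indAt y w j) (δ a : ℝ)
    (hδ0 : 0 < δ) (hδ1 : δ < 1) (ha : a ≤ δ)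
    (M : ℕ) (hM : 0 < M) (hMτ : 2 * Real.pi / M ≤ a / δ) :
    |∑ i ∈ range N, (indAt x w (m + i) - indAt y w (m + i)) * (1 - δ) ^ i| ^ M
      ≤ kmerL1 p k x y * Real.exp (n * (p * a ^ 2 / (2 * (1 - p) ^ 2))) * (n : ℝ) ^ (M - 1) := by
  set c : ℕ → ℝ := fun j => indAt x w j - indAt y w j with hc
  have hc1 : ∀ j, |c j| ≤ 1 := by
    intro j
    rcases indAt_cases x w j with h | h <;> rcases indAt_cases y w j with h' | h' <;>
      simp [hc, h, h']
  set R : ℂ → ℂ := fun z => ∑ i ∈ range N, (c (m + i) : ℂ) * z ^ i with hR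
  have hRd : Differentiable ℂ R := by
    intro z; simp only [hR]; fun_prop
  have hNn : (N:ℝ) ≤ n := by
    have : N ≤ n := by omega
    exact_mod_cast this
  have key := arc_bound R hRd n
    (kmerL1 p k x y * Real.exp (n * (p * a ^ 2 / (2 * (1 - p) ^ 2)))) δ a hδ0 hδ1 ha ?_ ?_ M hM hMτ
  · have e : ‖R ((1 - δ : ℝ) : ℂ)‖ = |∑ i ∈ range N, c (m + i) * (1 - δ) ^ i| := by
      rw [← Real.norm_eq_abs, ← Complex.norm_real]
      simp only [hR]
      push_cast
      rfl
    rw [e] at key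
    exact key
  · intro v hv
    simp only [hR]
    refine (norm_sum_le _ _).trans ?_
    have : ∀ i ∈ range N, ‖(c (m + i) : ℂ) * v ^ i‖ ≤ 1 := by
      intro i _
      rw [norm_mul, norm_pow, hv, Complex.norm_real, one_pow, mul_one, Real.norm_eq_abs]
      exact hc1 _
    refine (sum_le_sum this).trans ?_
    simpa using hNn
  · intro v hv hv1
    have hpc : (1 - (p:ℂ)) ≠ 0 := by
      have : ((1 - p : ℝ) : ℂ) ≠ 0 := by
        rw [Complex.ofReal_ne_zero]; linarith
      simpa using this
    set s : ℝ := p * a ^ 2 / (2 * (1 - p) ^ 2) with hs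
    have hq : 0 < 1 - p := by linarith
    have hs0 : 0 ≤ s := by positivity
    have hu : ‖(v - p) / (1 - p)‖ ≤ Real.exp s := by
      rw [← sq_le_sq₀ (norm_nonneg _) (Real.exp_pos _).le, ← Real.exp_nat_mul]
      have h1 : ‖v - p‖ ^ 2 = (1 - p) ^ 2 + p * ‖v - 1‖ ^ 2 := by
        have hvv : v.re * v.re + v.im * v.im = 1 := by
          have := Complex.sq_norm v
          rw [hv, Complex.normSq_apply] at this; linarith
        rw [Complex.sq_norm, Complex.sq_norm]
        simp [Complex.normSq_apply]
        linear_combination (1 - p) * hvv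
      rw [norm_div, show (1 - (p:ℂ)) = ((1 - p : ℝ) : ℂ) by push_cast; ring, Complex.norm_real,
        Real.norm_of_nonneg hq.le, div_pow, h1]
      refine le_trans ?_ (Real.add_one_le_exp _)
      rw [div_le_iff₀ (by positivity)]
      have h2 : ‖v - 1‖ ^ 2 ≤ a ^ 2 := pow_le_pow_left₀ (norm_nonneg _) hv1 2
      have h3 : (((2:ℕ):ℝ) * s + 1) * (1 - p) ^ 2 = p * a ^ 2 + (1 - p) ^ 2 := by
        rw [hs]; field_simp; push_cast; ring
      rw [h3]
      nlinarith
    have h := gen_bound p k hk hn x y w _ _ (Real.one_le_exp hs0) hu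
    rw [mul_div_cancel₀ _ hpc, add_sub_cancel, hN] at h
    rw [shift_poly c m N (fun j hj => by simp [hc, hlow j hj]) v] at h
    rw [norm_mul, norm_pow, hv, one_pow, one_mul, ← Real.exp_nat_mul] at h
    exact h

set_option maxHeartbeats 2000000 in
theorem main_two (p : ℝ) (hp0 : 0 ≤ p) (hp1 : p < 1) (n : ℕ) (hn : 3 ≤ n)
    (hlarge : 4 * Real.log n < (n : ℝ) ^ ((1 : ℝ) / 5)) (k : ℕ)
    (hk : k = ⌈2 * (n : ℝ) ^ ((1 : ℝ) / 5)⌉₊) (x y : Fin n → Bool) (d : ℕ) (hd : d < n)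
    (hdk : k ≤ d + 1)
    (hag : ∀ i < d, extS x i = extS y i) (hne : extS x d ≠ extS y d)
    (hW : NoPer (fun t => extS x (d + 1 - k + t)) k (k / 2)) :
    Real.exp (-((54 + p / (2 * (1 - p) ^ 2)) * (n : ℝ) ^ ((1 : ℝ) / 5) * (Real.log n) ^ 5)) ≤
      kmerL1 p k x y := by
  set L : ℝ := (n : ℝ) ^ ((1 : ℝ) / 5) with hL
  set lg : ℝ := Real.log n with hlg
  have hnR : (3:ℝ) ≤ n := by exact_mod_cast hn
  have hn0 : (0:ℝ) < n := by linarith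
  have hlg1 : 1 ≤ lg := by
    rw [hlg, Real.le_log_iff_exp_le hn0]
    have := Real.exp_one_lt_d9
    linarith
  have hL4 : 4 < L := by linarith
  have hL0 : 0 < L := by linarith
  have hLn : L ≤ n := by
    rw [hL]
    conv_rhs => rw [← Real.rpow_one (n:ℝ)]
    exact Real.rpow_le_rpow_of_exponent_le (by linarith) (by norm_num)
  have hL5 : L ^ 5 = n := by
    rw [hL, ← Real.rpow_natCast, ← Real.rpow_mul hn0.le]; norm_num
  have hkL : 2 * L ≤ k := by rw [hk]; exact Nat.le_ceil _
  have hk1 : 1 ≤ k := by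
    have : (0:ℝ) < k := by linarith
    exact_mod_cast this
  obtain ⟨hlow, hx1, hy0⟩ := basic_facts k hk1 x y d hd hag hne
  set m := d + 1 - k with hm
  set W : ℕ → Bool := fun t => extS x (m + t) with hWdef
  set w : Fin k → Bool := fun t => extS x (m + t.1) with hw
  obtain ⟨N, hN⟩ : ∃ N, n - k + 1 = m + N := ⟨n - k + 1 - m, by omega⟩
  have hN0 : 0 < N := by omega
  have hNn : (N:ℝ) ≤ n := by
    have : N ≤ n := by omega
    exact_mod_cast this
  set l := k / 2 with hl
  have hlL : L / 2 ≤ l := by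
    have : k ≤ 2 * l + 1 := by omega
    have : (k:ℝ) ≤ 2 * l + 1 := by exact_mod_cast this
    linarith
  set δ : ℝ := 4 * lg / L with hδ
  have hδ0 : 0 < δ := by positivity
  have hδ1 : δ < 1 := by rw [hδ, div_lt_one hL0]; linarith
  set a : ℝ := 1 / L ^ 2 with ha
  have haδ : a / δ = 1 / (4 * L * lg) := by
    rw [ha, hδ]; field_simp
  have haled : a ≤ δ := by
    rw [← div_le_one hδ0, haδ, div_le_one (by positivity)]
    nlinarith
  have hpi := Real.pi_pos
  set M : ℕ := ⌈2 * Real.pi * (4 * L * lg)⌉₊ with hM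
  have hM0 : 0 < M := Nat.ceil_pos.2 (by positivity)
  have hMR : (0:ℝ) < M := by exact_mod_cast hM0
  have hMτ : 2 * Real.pi / M ≤ a / δ := by
    rw [haδ, div_le_div_iff₀ hMR (by positivity), one_mul]
    exact Nat.le_ceil _
  have hMle : (M:ℝ) ≤ 27 * (L * lg) := by
    have h1 : (M:ℝ) < 2 * Real.pi * (4 * L * lg) + 1 := Nat.ceil_lt_add_one (by positivity)
    have h2 := Real.pi_lt_d2
    have h3 : 4 ≤ L * lg := by nlinarith
    nlinarith
  have key := case_two p hp0 hp1 n k hk1 (by omega) x y w m N hN hlow δ a hδ0 hδ1 haled M hM0 hMτ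
  have hlower : 1 / (n:ℝ) ≤
      |∑ i ∈ range N, (indAt x w (m + i) - indAt y w (m + i)) * (1 - δ) ^ i| := by
    refine le_trans ?_ (le_abs_self _)
    have hs := sparse_lower (fun i => indAt x w (m + i) - indAt y w (m + i))
      (fun i => indAt y w (m + i)) N l (1 - δ) (by linarith) (by linarith) hN0
      (by simp only [add_zero]; rw [hx1, hy0]; norm_num)
      (by intro i; rcases indAt_cases x w (m + i) with h | h <;> simp only [h] <;> linarith)
      (fun i => indAt_cases y w (m + i))
      (by
        intro i j hi hij hjl hjN h
        exact occ_sep k l y W hW (m + i) (m + j) (by omega) (by omega) (by omega) h)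
    refine le_trans ?_ hs
    have hr : (1 - δ) ^ l ≤ 1 / (n:ℝ) ^ 2 := by
      have h1 : (1 - δ) ^ l ≤ Real.exp (-δ) ^ l := by
        refine pow_le_pow_left₀ (by linarith) ?_ l
        have := Real.add_one_le_exp (-δ); linarith
      refine h1.trans ?_
      rw [← Real.exp_nat_mul]
      have h2 : (l:ℝ) * -δ ≤ -(2 * lg) := by
        have : L / 2 * δ = 2 * lg := by rw [hδ]; field_simp; ring
        nlinarith
      refine (Real.exp_le_exp.2 h2).trans ?_
      rw [Real.exp_neg, two_mul, Real.exp_add, hlg, Real.exp_log hn0, one_div, sq]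
    have hδn : 2 / (n:ℝ) ≤ δ := by
      rw [hδ, div_le_div_iff₀ hn0 hL0]
      have hh : (n:ℝ) ≤ lg * n := le_mul_of_one_le_left hn0.le hlg1
      linarith
    have h3 : (N:ℝ) * (1 - δ) ^ l ≤ 1 / n := by
      calc (N:ℝ) * (1 - δ) ^ l ≤ n * (1 / (n:ℝ) ^ 2) :=
            mul_le_mul hNn hr (pow_nonneg (by linarith) _) hn0.le
        _ = 1 / n := by field_simp
    have : 2 / (n:ℝ) = 1 / n + 1 / n := by ring
    linarith
  have hK := (pow_le_pow_left₀ (by positivity) hlower M).trans key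
  have hE : (n:ℝ) * (p * a ^ 2 / (2 * (1 - p) ^ 2)) = p / (2 * (1 - p) ^ 2) * L := by
    have hq : (1 - p) ≠ 0 := by linarith
    rw [ha, ← hL5]; field_simp
  rw [hE] at hK
  set q : ℝ := p / (2 * (1 - p) ^ 2) with hq
  have hq0 : 0 ≤ q := by positivity
  have hnexp : (n:ℝ) = Real.exp lg := by rw [hlg, Real.exp_log hn0]
  have hKnn : 0 ≤ kmerL1 p k x y :=
    sum_nonneg fun w _ => sum_nonneg fun i _ => abs_nonneg _
  have hnM : (n:ℝ) ^ (M - 1) ≤ (n:ℝ) ^ M :=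
    pow_le_pow_right₀ (by linarith) (by omega)
  have hK2 : (1 / (n:ℝ)) ^ M ≤ kmerL1 p k x y * Real.exp (q * L) * (n:ℝ) ^ M :=
    hK.trans (mul_le_mul_of_nonneg_left hnM (by positivity))
  have e1 : (n:ℝ) ^ M = Real.exp (M * lg) := by rw [Real.exp_nat_mul, ← hnexp]
  rw [one_div, inv_pow, e1, ← Real.exp_neg, mul_assoc, ← Real.exp_add] at hK2
  have hfin : Real.exp (-(M * lg) - (q * L + M * lg)) ≤ kmerL1 p k x y := by
    rw [Real.exp_sub, div_le_iff₀ (Real.exp_pos _)]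
    exact hK2
  refine le_trans (Real.exp_le_exp.2 ?_) hfin
  have hp2 : lg ^ 2 ≤ lg ^ 5 := pow_le_pow_right₀ hlg1 (by norm_num)
  have hp1' : 1 ≤ lg ^ 5 := one_le_pow₀ hlg1
  have g1 : (M:ℝ) * lg ≤ 27 * (L * lg ^ 5) := by
    calc (M:ℝ) * lg ≤ 27 * (L * lg) * lg := mul_le_mul_of_nonneg_right hMle (by linarith)
      _ = 27 * (L * lg ^ 2) := by ring
      _ ≤ _ := by gcongr
  have g2 : q * L ≤ q * L * lg ^ 5 := le_mul_of_one_le_right (by positivity) hp1'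
  nlinarith

theorem exists_first_diff {n : ℕ} (x y : Fin n → Bool) (hxy : x ≠ y) :
    ∃ d < n, (∀ i < d, extS x i = extS y i) ∧ extS x d ≠ extS y d := by
  classical
  have hex : ∃ d, d < n ∧ extS x d ≠ extS y d := by
    obtain ⟨i, hi⟩ := Function.ne_iff.1 hxy
    refine ⟨i.1, i.2, ?_⟩
    rw [extS_of_lt x _ i.2, extS_of_lt y _ i.2]
    exact hi
  refine ⟨Nat.find hex, (Nat.find_spec hex).1, ?_, (Nat.find_spec hex).2⟩
  intro i hi
  by_contra h
  exact Nat.find_min hex hi ⟨hi.trans (Nat.find_spec hex).1, h⟩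

/-- For every deletion probability `p ∈ [0,1)` there is a constant `C > 0`
(depending only on `p`) such that for every `n ≥ 2`, with `k = ⌈2 n^{1/5}⌉`, for all distinct
`x, y ∈ {0,1}^n` we have `‖K_x - K_y‖₁ ≥ exp(-C n^{1/5} (log n)^5)`. -/
theorem stmt_0 (p : ℝ) (hp0 : 0 ≤ p) (hp1 : p < 1) :
    ∃ C : ℝ, 0 < C ∧ ∀ n : ℕ, 2 ≤ n →
      ∀ x y : Fin n → Bool, x ≠ y →
        Real.exp (-(C * (n : ℝ) ^ ((1 : ℝ)/5) * (Real.log n) ^ 5)) ≤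
          kmerL1 p (⌈2 * (n : ℝ) ^ ((1 : ℝ)/5)⌉₊) x y := by
  obtain ⟨c, hc0, hc⟩ := case_one p hp0 hp1
  obtain ⟨N0, hN0⟩ : ∃ N0 : ℕ, ∀ n : ℕ, N0 ≤ n → 3 ≤ n ∧
      4 * Real.log n < (n : ℝ) ^ ((1 : ℝ) / 5) := by
    have h := (isLittleO_log_rpow_atTop (show (0:ℝ) < 1 / 5 by norm_num)).bound
      (show (0:ℝ) < 1 / 5 by norm_num)
    have h2 := tendsto_natCast_atTop_atTop (R := ℝ) |>.eventually h
    obtain ⟨N1, hN1⟩ := Filter.eventually_atTop.1 h2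
    refine ⟨max N1 3, fun n hn => ⟨le_trans (le_max_right _ _) hn, ?_⟩⟩
    have h3 := hN1 n (le_trans (le_max_left _ _) hn)
    have hn3 : 3 ≤ n := le_trans (le_max_right _ _) hn
    have hn0 : (0:ℝ) < n := by exact_mod_cast (by omega : 0 < n)
    have hpos : 0 < (n:ℝ) ^ ((1:ℝ) / 5) := Real.rpow_pos_of_pos hn0 _
    rw [Real.norm_of_nonneg hpos.le] at h3
    have h4 := (le_abs_self (Real.log n)).trans h3
    linarith
  set ρ : ℝ := (1 + p) / 2 with hρ
  have hρ0 : 0 < ρ := by positivity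
  have hρ1 : ρ ≤ 1 := by rw [hρ]; linarith
  set c1 : ℝ := c * ρ ^ N0 with hc1
  have hc10 : 0 < c1 := by positivity
  have hl2 : 0 < Real.log 2 := Real.log_pos (by norm_num)
  set A : ℝ := |Real.log c1| / (Real.log 2) ^ 5 with hA
  have hA0 : 0 ≤ A := by positivity
  have hq0 : 0 ≤ p / (2 * (1 - p) ^ 2) := by positivity
  refine ⟨A + (54 + p / (2 * (1 - p) ^ 2)), by positivity, ?_⟩
  intro n hn x y hxy
  have hnR : (2:ℝ) ≤ n := by exact_mod_cast hn
  have hL1 : 1 ≤ (n:ℝ) ^ ((1:ℝ) / 5) := Real.one_le_rpow (by linarith) (by norm_num)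
  have hlg : Real.log 2 ≤ Real.log n := Real.log_le_log (by norm_num) hnR
  have hlg5 : (Real.log 2) ^ 5 ≤ (Real.log n) ^ 5 := pow_le_pow_left₀ hl2.le hlg 5
  obtain ⟨d, hd, hag, hne⟩ := exists_first_diff x y hxy
  set k := ⌈2 * (n : ℝ) ^ ((1 : ℝ)/5)⌉₊ with hk
  have hk1 : 1 ≤ k := Nat.ceil_pos.2 (by positivity)
  set L : ℝ := (n:ℝ) ^ ((1:ℝ) / 5) with hL
  have hX : (Real.log 2) ^ 5 ≤ L * (Real.log n) ^ 5 :=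
    hlg5.trans (le_mul_of_one_le_left (by positivity) hL1)
  have hX0 : 0 ≤ L * (Real.log n) ^ 5 := le_trans (by positivity) hX
  by_cases hcase : N0 ≤ n ∧ k ≤ d + 1
  · obtain ⟨hn3, hlarge⟩ := hN0 n hcase.1
    have hkd := hcase.2
    have hmain : Real.exp (-((54 + p / (2 * (1 - p) ^ 2)) * L * (Real.log n) ^ 5)) ≤
        kmerL1 p k x y := by
      rcases noPer_or (fun t => extS x (d + 1 - k + t)) (fun t => extS y (d + 1 - k + t)) k (k / 2)
        (by omega) (fun t ht => hag _ (by omega))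
        (by
          rw [show d + 1 - k + (k - 1) = d by omega]
          exact hne) with h | h
      · exact main_two p hp0 hp1 n hn3 hlarge k hk x y d hd hkd hag hne h
      · rw [kmerL1_symm]
        exact main_two p hp0 hp1 n hn3 hlarge k hk y x d hd hkd
          (fun i hi => (hag i hi).symm) hne.symm h
    refine le_trans (Real.exp_le_exp.2 ?_) hmain
    nlinarith [mul_nonneg hA0 hX0]
  · obtain ⟨hlow, hx1, hy0⟩ := basic_facts k hk1 x y d hd hag hne
    have h1 := hc n k hk1 (by omega) x y _ (d + 1 - k) (by omega) hlow hx1 hy0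
    have hmN : d + 1 - k ≤ N0 := by
      by_contra hcon
      exact hcase ⟨by omega, by omega⟩
    have h2 : c1 ≤ kmerL1 p k x y :=
      le_trans (mul_le_mul_of_nonneg_left (pow_le_pow_of_le_one hρ0.le hρ1 hmN) hc0.le) h1
    refine le_trans ?_ h2
    rw [← Real.le_log_iff_exp_le hc10]
    have h3 : |Real.log c1| ≤ A * (L * (Real.log n) ^ 5) := by
      calc |Real.log c1| = A * (Real.log 2) ^ 5 := by rw [hA]; field_simp
        _ ≤ _ := mul_le_mul_of_nonneg_left hX hA0
    have h4 := neg_abs_le (Real.log c1)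
    have h5 : 0 ≤ (54 + p / (2 * (1 - p) ^ 2)) * (L * (Real.log n) ^ 5) :=
      mul_nonneg (by positivity) hX0
    linarith
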